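/- arXiv:1201.4867 — 2 statements merged into one kernel-verified Lean document; each statement's English description precedes it below -/
import Mathlib

section
/- A function B : G × G → ℂ taking only nonzero values is bilinear if and only if there exists an additive group endomorphism ϖ : G →+ G such that B(g,h) = χ_{ϖ(g)}(h) for all g, h ∈ G; moreover, when such an endomorphism exists it is unique. -/
/-- The character `χ_g` of the finite abelian group `G = ∀ i, ZMod (d i)`. -/
noncomputable def chi {m : ℕ} {d : Fin m → ℕ} (g h : ∀ i, ZMod (d i)) : ℂ :=
  Complex.exp (2 * Real.pi * Complex.I *
    ∑ i, ((g i).val : ℂ) * ((h i).val : ℂ) / ((d i : ℕ) : ℂ))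

open ZMod in
lemma chi_eq_prod {m : ℕ} {d : Fin m → ℕ} [∀ i, NeZero (d i)] (g h : ∀ i, ZMod (d i)) :
    chi g h = ∏ i, (stdAddChar (g i * h i) : ℂ) := by
  unfold chi
  rw [Finset.mul_sum, Complex.exp_sum]
  refine Finset.prod_congr rfl fun i _ => ?_
  have h1 : g i * h i = (((g i).val * (h i).val : ℕ) : ℤ) := by
    push_cast
    simp
  rw [h1, stdAddChar_coe]
  push_cast
  congr 1
  ring

lemma chi_add_left {m : ℕ} {d : Fin m → ℕ} [∀ i, NeZero (d i)] (g g' h : ∀ i, ZMod (d i)) :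
    chi (g + g') h = chi g h * chi g' h := by
  simp only [chi_eq_prod, Pi.add_apply, add_mul, AddChar.map_add_eq_mul, Finset.prod_mul_distrib]

lemma chi_add_right {m : ℕ} {d : Fin m → ℕ} [∀ i, NeZero (d i)] (g h h' : ∀ i, ZMod (d i)) :
    chi g (h + h') = chi g h * chi g h' := by
  simp only [chi_eq_prod, Pi.add_apply, mul_add, AddChar.map_add_eq_mul, Finset.prod_mul_distrib]

lemma chi_inj {m : ℕ} {d : Fin m → ℕ} [∀ i, NeZero (d i)] {g g' : ∀ i, ZMod (d i)}
    (H : ∀ h, chi g h = chi g' h) : g = g' := by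
  funext i
  have key : ∀ g : ∀ i, ZMod (d i), chi g (Pi.single i 1) = ZMod.stdAddChar (g i) := by
    intro g
    rw [chi_eq_prod, Finset.prod_eq_single i]
    · simp
    · intro j _ hj
      simp [Pi.single_eq_of_ne hj]
    · simp
  have := H (Pi.single i 1)
  rw [key, key] at this
  exact ZMod.injective_stdAddChar this

/-- `chi g` as an additive character. -/
noncomputable def chiChar {m : ℕ} {d : Fin m → ℕ} [∀ i, NeZero (d i)] (g : ∀ i, ZMod (d i)) :
    AddChar (∀ i, ZMod (d i)) ℂ where
  toFun := chi g
  map_zero_eq_one' := by simp [chi]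
  map_add_eq_mul' := chi_add_right g

lemma chiChar_surj {m : ℕ} {d : Fin m → ℕ} [∀ i, NeZero (d i)] :
    Function.Surjective (chiChar (d := d)) := by
  classical
  refine ((Fintype.bijective_iff_injective_and_card _).2 ⟨?_, ?_⟩).2
  · intro g g' H
    exact chi_inj fun h => DFunLike.congr_fun H h
  · exact (AddChar.card_eq).symm

/-- A nowhere-zero function `B : G × G → ℂ` is bilinear iff `B(g,h) = χ_{ϖ(g)}(h)` for a
(unique) additive endomorphism `ϖ` of `G`. -/
theorem stmt_5 (m : ℕ) (hm : 0 < m) (d : Fin m → ℕ) [∀ i, NeZero (d i)]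
    (B : (∀ i, ZMod (d i)) × (∀ i, ZMod (d i)) → ℂ) (hB0 : ∀ p, B p ≠ 0) :
    ((∀ g h x : ∀ i, ZMod (d i),
        B (g + h, x) = B (g, x) * B (h, x) ∧ B (x, g + h) = B (x, g) * B (x, h)) ↔
      ∃ ϖ : (∀ i, ZMod (d i)) →+ (∀ i, ZMod (d i)), ∀ g h, B (g, h) = chi (ϖ g) h) ∧
    ∀ ϖ ϖ' : (∀ i, ZMod (d i)) →+ (∀ i, ZMod (d i)),
      (∀ g h, B (g, h) = chi (ϖ g) h) → (∀ g h, B (g, h) = chi (ϖ' g) h) → ϖ = ϖ' := by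
  refine ⟨⟨fun H => ?_, ?_⟩, ?_⟩
  · have h1 : ∀ g, ∃ w : ∀ i, ZMod (d i), ∀ h, B (g, h) = chi w h := by
      intro g
      have h0 : B (g, 0) = 1 := by
        have := (H 0 0 g).2
        rw [add_zero] at this
        exact (mul_eq_left₀ (hB0 _)).1 this.symm
      obtain ⟨w, hw⟩ := chiChar_surj (d := d)
        { toFun := fun h => B (g, h)
          map_zero_eq_one' := h0
          map_add_eq_mul' := fun a b => (H a b g).2 }
      exact ⟨w, fun h => (DFunLike.congr_fun hw h).symm⟩
    choose w hw using h1
    refine ⟨AddMonoidHom.mk' w fun a b => chi_inj fun h => ?_, hw⟩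
    rw [← hw, chi_add_left, ← hw, ← hw, (H a b h).1]
  · rintro ⟨w, hw⟩ g h x
    simp only [hw, map_add, chi_add_left, chi_add_right, and_self]
  · intro w w' h h'
    refine DFunLike.ext _ _ fun g => ?_
    exact chi_inj fun x => (h g x).symm.trans (h' g x)
end

section
/- Let α : G ≃+ G be an additive automorphism of G and let U_α ∈ Matrix G G ℂ be the permutation matrix with (U_α)_{h,k} = 1 if h = α(k) and 0 otherwise. Then for every g ∈ G: U_α·X(g)·U_αᴴ = X(α(g)); moreover, if β : G →+ G is an additive endomorphism satisfying χ_{β(g)}(h) = χ_g(α⁻¹(h)) for all g, h ∈ G (the dual endomorphism of α⁻¹), then U_α·Z(g)·U_αᴴ = Z(β(g)) for every g ∈ G. -/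
open scoped Matrix

/-- The Pauli `X`-type matrix: `X(g)_{h,k} = 1` if `h = k + g`, else `0`. -/
noncomputable def Xop {m : ℕ} {d : Fin m → ℕ} (g : ∀ i, ZMod (d i)) :
    Matrix (∀ i, ZMod (d i)) (∀ i, ZMod (d i)) ℂ :=
  Matrix.of fun h k => if h = k + g then (1 : ℂ) else 0

/-- The Pauli `Z`-type matrix: the diagonal matrix with entries `χ_g(h)`. -/
noncomputable def Zop {m : ℕ} {d : Fin m → ℕ} (g : ∀ i, ZMod (d i)) :
    Matrix (∀ i, ZMod (d i)) (∀ i, ZMod (d i)) ℂ :=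
  Matrix.diagonal fun h => chi g h

/-- Conjugation of `X(g)` and `Z(g)` by the permutation matrix `U_α` of an automorphism
`α`: `U_α X(g) U_αᴴ = X(α(g))`, and `U_α Z(g) U_αᴴ = Z(β(g))` where `β` is the dual
endomorphism of `α⁻¹`. -/
theorem stmt_12 (m : ℕ) (hm : 0 < m) (d : Fin m → ℕ) [∀ i, NeZero (d i)]
    (α : (∀ i, ZMod (d i)) ≃+ (∀ i, ZMod (d i)))
    (U : Matrix (∀ i, ZMod (d i)) (∀ i, ZMod (d i)) ℂ)
    (hU : ∀ h k, U h k = if h = α k then (1 : ℂ) else 0) :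
    (∀ g, U * Xop g * Uᴴ = Xop (α g)) ∧
    ∀ β : (∀ i, ZMod (d i)) →+ (∀ i, ZMod (d i)),
      (∀ g h, chi (β g) h = chi g (α.symm h)) →
      ∀ g, U * Zop g * Uᴴ = Zop (β g) := by
  have hU' : ∀ h k, U h k = if α.symm h = k then (1 : ℂ) else 0 := by
    intro h k
    rw [hU]
    simp only [AddEquiv.symm_apply_eq]
  have key : ∀ (M : Matrix (∀ i, ZMod (d i)) (∀ i, ZMod (d i)) ℂ) (h k),
      (U * M * Uᴴ) h k = M (α.symm h) (α.symm k) := by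
    intro M h k
    simp [Matrix.mul_apply, Matrix.conjTranspose_apply, hU', apply_ite]
  refine ⟨fun g => ?_, fun β hβ g => ?_⟩
  · ext h k
    rw [key]
    have e : α.symm h = α.symm k + g ↔ h = k + α g := by
      rw [AddEquiv.symm_apply_eq, map_add, AddEquiv.apply_symm_apply]
    simp only [Xop, Matrix.of_apply, e]
  · ext h k
    rw [key]
    simp only [Zop, Matrix.diagonal_apply, hβ, EmbeddingLike.apply_eq_iff_eq]
end
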